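/- arXiv:1512.01186 — 2 statements merged into one kernel-verified Lean document; each statement's English description precedes it below -/
import Mathlib

section
/- Integral transformation formula of the Mordell integral: let x, τ be complex numbers with Re(τ) > 0. Then ∫_{0 ↗ 1} (e^{iπτu² + 2πixu}/(e^{2πiu} − 1)) du = (e^{iπ(1/4 − x²/τ)}/√τ)·∫_{0 ↖ 1} (e^{−iπu²/τ + 2πixu/τ}/(e^{−2πiu} − 1)) du, where √τ denotes the principal branch of the square root. -/
open scoped Real
open MeasureTheory Set Complex

/-- Integral along the straight line `t ↦ c + e^{iθ} t`, `t ∈ ℝ`. -/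
noncomputable def lineInt (c θ : ℝ) (f : ℂ → ℂ) : ℂ :=
  ∫ t : ℝ, f ((c : ℂ) + Complex.exp ((θ : ℂ) * Complex.I) * (t : ℂ)) *
    Complex.exp ((θ : ℂ) * Complex.I)

/-!
The Gaussian `exp (πiτu² + 2πixu)` is itself an integral of `exp (-πiv²/τ + 2πixv/τ) exp (2πiuv)`
over the conjugate line `v ∈ c₂ + e^{3πi/4} ℝ`. Since `e^{πi/4} e^{3πi/4} = -1`, the kernel
`exp (2πiuv)` restricted to the two lines is, up to factors depending on `u` or `v` alone, the
Fourier kernel, so self-adjointness of the Fourier transform exchanges the two integrals. The inner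
integral is then `∫ exp (2πiuv) / (exp (2πiu) - 1) du = 1 / (1 - exp (-2πiv))`: the translation
`u ↦ u - 1` multiplies the integrand by `exp (-2πiv)`, and the lines through `c₁` and `c₁ - 1`
enclose a single pole, at `0`.
-/

open Filter Asymptotics
open scoped Topology Interval FourierTransform

section Rectangle

variable {E : Type*} [NormedAddCommGroup E]

lemma intervalIntegrable_horizontal {f : ℂ → E} {a b y : ℝ}
    (hf : ContinuousOn f ([[a, b]] ×ℂ {y})) :
    IntervalIntegrable (fun x : ℝ ↦ f (x + y * I)) volume a b :=
  (hf.comp (by fun_prop) fun x hx ↦ by simpa [mem_reProdIm] using hx).intervalIntegrable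

lemma intervalIntegrable_vertical {f : ℂ → E} {a b x : ℝ}
    (hf : ContinuousOn f ({x} ×ℂ [[a, b]])) :
    IntervalIntegrable (fun y : ℝ ↦ f (x + y * I)) volume a b :=
  (hf.comp (by fun_prop) fun y hy ↦ by simpa [mem_reProdIm] using hy).intervalIntegrable

variable [NormedSpace ℂ E]

/-- The integral of `f` along the boundary, traversed counterclockwise, of the rectangle with
opposite corners `z` and `w`, with the sign conventions of
`Complex.integral_boundary_rect_eq_zero_of_differentiableOn`. -/
noncomputable def rectBoundaryIntegral (f : ℂ → E) (z w : ℂ) : E :=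
  (∫ x : ℝ in z.re..w.re, f (x + z.im * I)) - (∫ x : ℝ in z.re..w.re, f (x + w.im * I)) +
    I • (∫ y : ℝ in z.im..w.im, f (w.re + y * I)) - I • ∫ y : ℝ in z.im..w.im, f (z.re + y * I)

variable {f g : ℂ → E} {z w p : ℂ}

lemma rectBoundaryIntegral_update (hp : p ∈ Ioo z.re w.re ×ℂ Ioo z.im w.im) (c : E) :
    rectBoundaryIntegral (Function.update f p c) z w = rectBoundaryIntegral f z w := by
  obtain ⟨⟨hzre, hwre⟩, hzim, hwim⟩ := hp
  have update_re {u : ℂ} (hu : u.re ≠ p.re) : Function.update f p c u = f u :=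
    Function.update_of_ne (fun h ↦ hu (congrArg re h)) _ _
  have update_im {u : ℂ} (hu : u.im ≠ p.im) : Function.update f p c u = f u :=
    Function.update_of_ne (fun h ↦ hu (congrArg im h)) _ _
  have hbot (x : ℝ) := update_im (u := x + z.im * I) (by simpa using hzim.ne)
  have htop (x : ℝ) := update_im (u := x + w.im * I) (by simpa using hwim.ne')
  have hright (y : ℝ) := update_re (u := w.re + y * I) (by simpa using hwre.ne')
  have hleft (y : ℝ) := update_re (u := z.re + y * I) (by simpa using hzre.ne)
  simp only [rectBoundaryIntegral, hbot, htop, hright, hleft]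

lemma rectBoundaryIntegral_sub
    (hf : ContinuousOn f (frontier ([[z.re, w.re]] ×ℂ [[z.im, w.im]])))
    (hg : ContinuousOn g (frontier ([[z.re, w.re]] ×ℂ [[z.im, w.im]]))) :
    rectBoundaryIntegral (f - g) z w = rectBoundaryIntegral f z w - rectBoundaryIntegral g z w := by
  have closure_uIcc (a b : ℝ) : closure [[a, b]] = [[a, b]] := isClosed_Icc.closure_eq
  have frontier_uIcc (a b : ℝ) : frontier [[a, b]] = {a, b} := by
    rw [uIcc, frontier_Icc inf_le_sup]
    rcases le_total a b with h | h <;> simp [h, pair_comm]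
  have hhor {y : ℝ} (hy : y = z.im ∨ y = w.im) :
      [[z.re, w.re]] ×ℂ {y} ⊆ frontier ([[z.re, w.re]] ×ℂ [[z.im, w.im]]) := by
    simp only [frontier_reProdIm, closure_uIcc, frontier_uIcc]
    rintro u ⟨hre, rfl⟩
    exact .inl ⟨hre, hy⟩
  have hver {x : ℝ} (hx : x = z.re ∨ x = w.re) :
      {x} ×ℂ [[z.im, w.im]] ⊆ frontier ([[z.re, w.re]] ×ℂ [[z.im, w.im]]) := by
    simp only [frontier_reProdIm, closure_uIcc, frontier_uIcc]
    rintro u ⟨rfl, him⟩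
    exact .inr ⟨hx, him⟩
  simp only [rectBoundaryIntegral, Pi.sub_apply]
  rw [intervalIntegral.integral_sub, intervalIntegral.integral_sub, intervalIntegral.integral_sub,
    intervalIntegral.integral_sub, smul_sub, smul_sub]
  · abel
  all_goals
    first
    | exact intervalIntegrable_horizontal (hf.mono (hhor (by simp)))
    | exact intervalIntegrable_horizontal (hg.mono (hhor (by simp)))
    | exact intervalIntegrable_vertical (hf.mono (hver (by simp)))
    | exact intervalIntegrable_vertical (hg.mono (hver (by simp)))

lemma rectBoundaryIntegral_smul_const [CompleteSpace E] (h : ℂ → ℂ) (r : E) :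
    rectBoundaryIntegral (fun ζ ↦ h ζ • r) z w = rectBoundaryIntegral h z w • r := by
  simp only [rectBoundaryIntegral, intervalIntegral.integral_smul_const, sub_smul, add_smul,
    smul_assoc]

lemma mul_integral_inv_add_mul {c d : ℂ} {a b : ℝ}
    (h : ∀ t ∈ [[a, b]], c + t * d ∈ slitPlane) :
    d * ∫ t : ℝ in a..b, (c + t * d)⁻¹ = log (c + b * d) - log (c + a * d) := by
  have hderiv : ∀ t ∈ [[a, b]],
      HasDerivAt (fun t : ℝ ↦ log (c + t * d)) (d * (c + t * d)⁻¹) t := fun t ht ↦ by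
    have hline : HasDerivAt (fun t : ℝ ↦ c + t * d) d t := by
      simpa using ((hasDerivAt_id t).ofReal_comp.mul_const d).const_add c
    simpa [div_eq_mul_inv] using hline.clog_real (h t ht)
  rw [← intervalIntegral.integral_const_mul,
    intervalIntegral.integral_eq_sub_of_hasDerivAt hderiv]
  refine ContinuousOn.intervalIntegrable (continuousOn_const.mul (ContinuousOn.inv₀ ?_ ?_))
  · fun_prop
  · exact fun t ht ↦ slitPlane_ne_zero (h t ht)

lemma integral_inv_horizontal_sub {a b y : ℝ} (hy : y ≠ p.im) :
    ∫ x : ℝ in a..b, ((x : ℂ) + y * I - p)⁻¹ = log (b + y * I - p) - log (a + y * I - p) := by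
  have hline (x : ℝ) : (x : ℂ) + y * I - p = y * I - p + x * 1 := by ring
  simp_rw [hline]
  rw [← mul_integral_inv_add_mul fun x _ ↦ .inr (by simpa [sub_eq_zero] using hy), one_mul]

lemma mul_integral_inv_vertical_sub {a b x : ℝ} (hx : p.re < x) :
    I * ∫ y : ℝ in a..b, ((x : ℂ) + y * I - p)⁻¹ =
      log (x + b * I - p) - log (x + a * I - p) := by
  have hline (y : ℝ) : (x : ℂ) + y * I - p = x - p + y * I := by ring
  simp_rw [hline]
  exact mul_integral_inv_add_mul fun y _ ↦ .inl (by simpa using hx)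

lemma mul_integral_inv_vertical_sub_of_lt {a b x : ℝ} (hx : x < p.re) :
    I * ∫ y : ℝ in a..b, ((x : ℂ) + y * I - p)⁻¹ =
      log (-(x + b * I - p)) - log (-(x + a * I - p)) := by
  have hline (y : ℝ) : -((x : ℂ) + y * I - p) = p - x + y * -I := by ring
  have hinv (y : ℝ) : ((x : ℂ) + y * I - p)⁻¹ = -(p - x + y * -I)⁻¹ := by
    rw [← hline, inv_neg, neg_neg]
  simp_rw [hinv, hline]
  rw [intervalIntegral.integral_neg, mul_neg, ← neg_mul]
  exact mul_integral_inv_add_mul fun y _ ↦ .inl (by simpa using hx)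

lemma log_sub_log_neg_of_im_pos {z : ℂ} (hz : 0 < z.im) : log z - log (-z) = π * I := by
  apply Complex.ext <;> simp [log_re, log_im, arg_neg_eq_arg_sub_pi_of_im_pos hz]

lemma rectBoundaryIntegral_inv_sub (hp : p ∈ Ioo z.re w.re ×ℂ Ioo z.im w.im) :
    rectBoundaryIntegral (fun ζ ↦ (ζ - p)⁻¹) z w = 2 * π * I := by
  obtain ⟨⟨hzre, hwre⟩, hzim, hwim⟩ := hp
  -- `log (ζ - p)` is a primitive off the left side, where its branch cut forces `log (p - ζ)`
  -- instead; the primitives differ by `± π * I` at the left corners.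
  have htop := log_sub_log_neg_of_im_pos (z := z.re + w.im * I - p) (by simpa using hwim)
  have hbot := log_sub_log_neg_of_im_pos (z := -(z.re + z.im * I - p)) (by simpa using hzim)
  rw [neg_neg] at hbot
  simp only [rectBoundaryIntegral, smul_eq_mul]
  rw [integral_inv_horizontal_sub hzim.ne, integral_inv_horizontal_sub hwim.ne',
    mul_integral_inv_vertical_sub hwre, mul_integral_inv_vertical_sub_of_lt hzre]
  linear_combination htop + hbot

lemma isLittleO_inv_sub_of_tendsto
    (hf : Tendsto (fun ζ ↦ (ζ - p) • f ζ) (𝓝[≠] p) (𝓝 0)) :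
    f =o[𝓝[≠] p] fun ζ ↦ (ζ - p)⁻¹ := by
  have := (isBigO_refl (fun ζ ↦ (ζ - p)⁻¹) (𝓝[≠] p)).smul_isLittleO ((isLittleO_one_iff ℂ).2 hf)
  refine this.congr' ?_ (.of_forall fun ζ ↦ mul_one _)
  filter_upwards [self_mem_nhdsWithin] with ζ hζ
  exact inv_smul_smul₀ (sub_ne_zero.2 hζ) _

lemma rectBoundaryIntegral_of_tendsto_sub_smul [CompleteSpace E] {r : E}
    (hp : p ∈ Ioo z.re w.re ×ℂ Ioo z.im w.im)
    (hf : DifferentiableOn ℂ f ([[z.re, w.re]] ×ℂ [[z.im, w.im]] \ {p}))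
    (hr : Tendsto (fun ζ ↦ (ζ - p) • f ζ) (𝓝[≠] p) (𝓝 r)) :
    rectBoundaryIntegral f z w = (2 * π * I) • r := by
  set R := [[z.re, w.re]] ×ℂ [[z.im, w.im]]
  have hinterior : R ∈ 𝓝 p := mem_of_superset ((isOpen_Ioo.reProdIm isOpen_Ioo).mem_nhds hp)
    (inter_subset_inter (preimage_mono (Ioo_subset_Icc_self.trans Icc_subset_uIcc))
      (preimage_mono (Ioo_subset_Icc_self.trans Icc_subset_uIcc)))
  have hfrontier : frontier R ⊆ R \ {p} := by
    refine fun ζ hζ ↦ ⟨(isClosed_Icc.reProdIm isClosed_Icc).frontier_subset hζ, ?_⟩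
    rintro rfl
    exact hζ.2 (mem_interior_iff_mem_nhds.2 hinterior)
  set polar : ℂ → E := fun ζ ↦ (ζ - p)⁻¹ • r
  have hpolar : DifferentiableOn ℂ polar (R \ {p}) := fun ζ hζ ↦
    (((differentiableAt_id.sub_const p).inv (sub_ne_zero.2 hζ.2)).smul_const
      r).differentiableWithinAt
  have hregular : Tendsto (fun ζ ↦ (ζ - p) • ((f - polar) ζ - (f - polar) p)) (𝓝[≠] p) (𝓝 0) := by
    have hconst : Tendsto (fun ζ ↦ (ζ - p) • (f - polar) p) (𝓝[≠] p) (𝓝 0) :=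
      tendsto_nhdsWithin_of_tendsto_nhds (Continuous.tendsto' (by fun_prop) _ _ (by simp))
    have hsub := (hr.sub_const r).sub hconst
    rw [sub_self, sub_zero] at hsub
    refine hsub.congr' ?_
    filter_upwards [self_mem_nhdsWithin] with ζ hζ
    simp only [Pi.sub_apply, smul_sub, polar, smul_inv_smul₀ (sub_ne_zero.2 hζ)]
  have hcauchy : rectBoundaryIntegral (f - polar) z w = 0 := by
    rw [← rectBoundaryIntegral_update hp]
    exact integral_boundary_rect_eq_zero_of_differentiableOn _ _ _
      (differentiableOn_update_limUnder_of_isLittleO hinterior (hf.sub hpolar)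
        (isLittleO_inv_sub_of_tendsto hregular))
  rw [rectBoundaryIntegral_sub (hf.continuousOn.mono hfrontier)
    (hpolar.continuousOn.mono hfrontier), sub_eq_zero] at hcauchy
  rw [hcauchy, rectBoundaryIntegral_smul_const, rectBoundaryIntegral_inv_sub hp]

end Rectangle

section Strip

/-- The filter describing `z → ∞` within the closed horizontal strip `a ≤ im z ≤ b`, in both
directions. -/
def stripEnds (a b : ℝ) : Filter ℂ := comap re (cocompact ℝ) ⊓ 𝓟 (im ⁻¹' Icc a b)

variable {E : Type*} [NormedAddCommGroup E] {f : ℂ → E} {a b y : ℝ}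

lemma eventually_im_mem_Icc_stripEnds (a b : ℝ) : ∀ᶠ z in stripEnds a b, z.im ∈ Icc a b :=
  mem_inf_of_right (mem_principal_self _)

lemma tendsto_abs_re_stripEnds (a b : ℝ) :
    Tendsto (fun z : ℂ ↦ |z.re|) (stripEnds a b) atTop :=
  (tendsto_norm_cocompact_atTop (E := ℝ)).comp (tendsto_comap.mono_left inf_le_left)

lemma tendsto_add_mul_I_stripEnds (hy : y ∈ Icc a b) :
    Tendsto (fun x : ℝ ↦ (x : ℂ) + y * I) (cocompact ℝ) (stripEnds a b) :=
  tendsto_inf.2 ⟨tendsto_comap_iff.2 (tendsto_id.congr fun x ↦ by simp),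
    tendsto_principal.2 (.of_forall fun x ↦ by simpa using hy)⟩

lemma tendsto_integral_vertical_of_stripEnds [NormedSpace ℝ E] (hab : a ≤ b)
    (hf : Tendsto f (stripEnds a b) (𝓝 0)) :
    Tendsto (fun x : ℝ ↦ ∫ y in a..b, f (x + y * I)) (cocompact ℝ) (𝓝 0) := by
  refine Metric.nhds_basis_closedBall.tendsto_right_iff.2 fun ε hε ↦ ?_
  have hδ : 0 < ε / (|b - a| + 1) := by positivity
  have hsmall := hf.eventually (Metric.closedBall_mem_nhds 0 hδ)
  rw [stripEnds, eventually_inf_principal, eventually_comap] at hsmall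
  filter_upwards [hsmall] with x hx
  rw [mem_closedBall_zero_iff]
  calc ‖∫ y in a..b, f (x + y * I)‖ ≤ ε / (|b - a| + 1) * |b - a| := by
        refine intervalIntegral.norm_integral_le_of_norm_le_const fun y hy ↦ ?_
        rw [uIoc_of_le hab] at hy
        exact mem_closedBall_zero_iff.1
          (hx (x + y * I) (by simp) (by simpa using Ioc_subset_Icc_self hy))
    _ ≤ ε / (|b - a| + 1) * (|b - a| + 1) := by gcongr; linarith
    _ = ε := div_mul_cancel₀ _ (by positivity)

lemma integral_sub_integral_of_tendsto_sub_smul [NormedSpace ℂ E] [CompleteSpace E] {p : ℂ} {r : E}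
    (hp : p.im ∈ Ioo a b) (hf : DifferentiableOn ℂ f (im ⁻¹' Icc a b \ {p}))
    (hr : Tendsto (fun z ↦ (z - p) • f z) (𝓝[≠] p) (𝓝 r))
    (hends : Tendsto f (stripEnds a b) (𝓝 0)) (ha : Integrable fun x : ℝ ↦ f (x + a * I))
    (hb : Integrable fun x : ℝ ↦ f (x + b * I)) :
    (∫ x : ℝ, f (x + a * I)) - (∫ x : ℝ, f (x + b * I)) = (2 * π * I) • r := by
  have hab := hp.1.trans hp.2
  have hvert := tendsto_integral_vertical_of_stripEnds hab.le hends
  have hright := (hvert.mono_left atTop_le_cocompact).const_smul I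
  have hleft := ((hvert.mono_left atBot_le_cocompact).comp
    tendsto_neg_atTop_atBot).const_smul I
  have hlines := (intervalIntegral_tendsto_integral ha tendsto_neg_atTop_atBot tendsto_id).sub
    (intervalIntegral_tendsto_integral hb tendsto_neg_atTop_atBot tendsto_id)
  have hboundary : Tendsto (fun T : ℝ ↦ rectBoundaryIntegral f ⟨-T, a⟩ ⟨T, b⟩) atTop
      (𝓝 ((∫ x : ℝ, f (x + a * I)) - ∫ x : ℝ, f (x + b * I))) := by
    simpa [rectBoundaryIntegral] using (hlines.add hright).sub hleft
  refine tendsto_nhds_unique hboundary (tendsto_const_nhds.congr' ?_)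
  filter_upwards [eventually_gt_atTop |p.re|] with T hT
  refine (rectBoundaryIntegral_of_tendsto_sub_smul ⟨abs_lt.1 hT, hp⟩ (hf.mono ?_) hr).symm
  refine sdiff_subset_sdiff_left fun z hz ↦ ?_
  simpa [uIcc_of_le hab.le] using hz.2

lemma integrable_of_isBigO_exp_neg_mul_abs {g : ℝ → E} {k : ℝ} (hk : 0 < k) (hg : Continuous g)
    (hO : g =O[cocompact ℝ] fun x ↦ Real.exp (-k * |x|)) : Integrable g := by
  rw [cocompact_eq_atBot_atTop, isBigO_sup] at hO
  refine hg.locallyIntegrable.integrable_of_isBigO_atBot_atTop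
    (hO.1.congr' .rfl ?_) ⟨Iic 0, Iic_mem_atBot 0, integrableOn_exp_mul_Iic hk 0⟩
    (hO.2.congr' .rfl ?_) ⟨Ioi 0, Ioi_mem_atTop 0, integrableOn_exp_mul_Ioi (neg_neg_of_pos hk) 0⟩
  · filter_upwards [eventually_le_atBot 0] with x hx
    rw [abs_of_nonpos hx, neg_mul_neg]
  · filter_upwards [eventually_ge_atTop 0] with x hx
    rw [abs_of_nonneg hx]

lemma tendsto_exp_neg_mul_abs_re_stripEnds {k : ℝ} (hk : 0 < k) :
    Tendsto (fun z : ℂ ↦ Real.exp (-k * |z.re|)) (stripEnds a b) (𝓝 0) :=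
  Real.tendsto_exp_atBot.comp
    ((tendsto_abs_re_stripEnds a b).const_mul_atTop_of_neg (neg_neg_of_pos hk))

section Decay

variable {p : ℂ} {k : ℝ}

lemma integrable_horizontal_of_isBigO_stripEnds (hk : 0 < k) (hy : y ∈ Icc a b) (hyp : y ≠ p.im)
    (hf : ContinuousOn f (im ⁻¹' Icc a b \ {p}))
    (hO : f =O[stripEnds a b] fun z ↦ Real.exp (-k * |z.re|)) :
    Integrable fun x : ℝ ↦ f (x + y * I) := by
  refine integrable_of_isBigO_exp_neg_mul_abs hk (hf.comp_continuous (by fun_prop) fun x ↦ ?_)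
    ((hO.comp_tendsto (tendsto_add_mul_I_stripEnds hy)).congr_right fun x ↦ by simp)
  refine ⟨by simpa using hy, fun h ↦ hyp ?_⟩
  simpa using congrArg im h

lemma integral_sub_integral_of_isBigO_stripEnds [NormedSpace ℂ E] [CompleteSpace E] {r : E}
    (hk : 0 < k) (hp : p.im ∈ Ioo a b) (hf : DifferentiableOn ℂ f (im ⁻¹' Icc a b \ {p}))
    (hr : Tendsto (fun z ↦ (z - p) • f z) (𝓝[≠] p) (𝓝 r))
    (hO : f =O[stripEnds a b] fun z ↦ Real.exp (-k * |z.re|)) :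
    (∫ x : ℝ, f (x + a * I)) - (∫ x : ℝ, f (x + b * I)) = (2 * π * I) • r := by
  have hab : a ≤ b := (hp.1.trans hp.2).le
  exact integral_sub_integral_of_tendsto_sub_smul hp hf hr
    (hO.trans_tendsto (tendsto_exp_neg_mul_abs_re_stripEnds hk))
    (integrable_horizontal_of_isBigO_stripEnds hk (left_mem_Icc.2 hab) hp.1.ne hf.continuousOn hO)
    (integrable_horizontal_of_isBigO_stripEnds hk (right_mem_Icc.2 hab) hp.2.ne' hf.continuousOn hO)

end Decay

end Strip

section ExpDecay

lemma exp_max_zero_re_le_two_mul_norm_exp_sub_one {w : ℂ} (hw : 1 ≤ |w.re|) :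
    Real.exp (max 0 w.re) ≤ 2 * ‖cexp w - 1‖ := by
  have htwo : 2 ≤ Real.exp 1 := by linarith [Real.add_one_le_exp (1 : ℝ)]
  rcases le_abs'.1 hw with h | h
  · have hsmall : Real.exp w.re * 2 ≤ 1 := calc
      Real.exp w.re * 2 ≤ Real.exp (-1) * Real.exp 1 := by gcongr
      _ = 1 := by rw [← Real.exp_add, neg_add_cancel, Real.exp_zero]
    have := norm_sub_norm_le 1 (cexp w)
    rw [norm_one, norm_exp, norm_sub_rev] at this
    rw [max_eq_left (by linarith), Real.exp_zero]
    linarith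
  · have hlarge : 2 ≤ Real.exp w.re := htwo.trans (Real.exp_le_exp.2 h)
    have := norm_sub_norm_le (cexp w) 1
    rw [norm_one, norm_exp] at this
    rw [max_eq_right (by linarith)]
    linarith

lemma norm_inv_exp_sub_one_mul_exp_le {w z : ℂ} (hw : 1 ≤ |w.re|) :
    ‖(cexp w - 1)⁻¹ * cexp z‖ ≤ 2 * Real.exp (z.re - max 0 w.re) := by
  have hlow := exp_max_zero_re_le_two_mul_norm_exp_sub_one hw
  have hpos : 0 < ‖cexp w - 1‖ := by linarith [Real.exp_pos (max 0 w.re)]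
  rw [norm_mul, norm_inv, norm_exp, inv_mul_eq_div, Real.exp_sub, mul_div_assoc',
    div_le_div_iff₀ hpos (Real.exp_pos _)]
  nlinarith [Real.exp_pos z.re]

lemma re_mul_sub_max_zero_re_mul_le {α β z : ℂ} {M : ℝ} (hz : |z.im| ≤ M) :
    (α * z).re - max 0 (β * z).re ≤
      (|α.im| + |β.im|) * M - min (-α.re) (α.re - β.re) * |z.re| := by
  have hα : -(|α.im| * |z.im|) ≤ α.im * z.im := by rw [← abs_mul]; exact neg_abs_le _
  have hβ : β.im * z.im ≤ |β.im| * |z.im| := by rw [← abs_mul]; exact le_abs_self _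
  have hαM : |α.im| * |z.im| ≤ |α.im| * M := by gcongr
  have hβM : |β.im| * |z.im| ≤ |β.im| * M := by gcongr
  have hβ0 : 0 ≤ |β.im| * |z.im| := by positivity
  simp only [mul_re]
  rcases le_total 0 z.re with h | h
  · have hrate := mul_le_mul_of_nonneg_right (min_le_left (-α.re) (α.re - β.re)) h
    rw [abs_of_nonneg h]
    linarith [le_max_left 0 (β.re * z.re - β.im * z.im)]
  · have hrate := mul_le_mul_of_nonpos_right (min_le_right (-α.re) (α.re - β.re)) h
    rw [abs_of_nonpos h]
    linarith [le_max_right 0 (β.re * z.re - β.im * z.im)]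

lemma eventually_stripEnds_one_le_abs_re_mul {β : ℂ} (hβ : β.re ≠ 0) (a b : ℝ) :
    ∀ᶠ z in stripEnds a b, 1 ≤ |(β * z).re| := by
  have hre : Tendsto (fun z : ℂ ↦ |β.re| * |z.re|) (stripEnds a b) atTop :=
    (tendsto_abs_re_stripEnds a b).const_mul_atTop (abs_pos.2 hβ)
  filter_upwards [hre.eventually_ge_atTop (1 + |β.im| * max |a| |b|),
    eventually_im_mem_Icc_stripEnds a b] with z hz hzim
  have hbdd : |β.im| * |z.im| ≤ |β.im| * max |a| |b| := by
    gcongr; exact abs_le_max_abs_abs hzim.1 hzim.2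
  have := abs_sub_abs_le_abs_sub (β.re * z.re) (β.im * z.im)
  rw [abs_mul, abs_mul] at this
  rw [mul_re]
  linarith

lemma isBigO_inv_exp_sub_one_mul_exp_stripEnds {α β : ℂ} (hβα : β.re < α.re) (hα : α.re < 0)
    (a b : ℝ) :
    (fun z ↦ (cexp (β * z) - 1)⁻¹ * cexp (α * z)) =O[stripEnds a b]
      fun z ↦ Real.exp (-min (-α.re) (α.re - β.re) * |z.re|) := by
  set M := max |a| |b|
  refine .of_bound (2 * Real.exp ((|α.im| + |β.im|) * M)) ?_
  filter_upwards [eventually_stripEnds_one_le_abs_re_mul (hβα.trans hα).ne a b,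
    eventually_im_mem_Icc_stripEnds a b] with z hz hzim
  calc ‖(cexp (β * z) - 1)⁻¹ * cexp (α * z)‖
      ≤ 2 * Real.exp ((α * z).re - max 0 (β * z).re) := norm_inv_exp_sub_one_mul_exp_le hz
    _ ≤ 2 * Real.exp ((|α.im| + |β.im|) * M - min (-α.re) (α.re - β.re) * |z.re|) := by
        gcongr 2 * Real.exp ?_
        exact re_mul_sub_max_zero_re_mul_le (abs_le_max_abs_abs hzim.1 hzim.2)
    _ = 2 * Real.exp ((|α.im| + |β.im|) * M) *
          ‖Real.exp (-min (-α.re) (α.re - β.re) * |z.re|)‖ := by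
        rw [Real.norm_of_nonneg (Real.exp_pos _).le, mul_assoc, ← Real.exp_add, neg_mul,
          sub_eq_add_neg]

lemma tendsto_mul_inv_exp_mul_sub_one {β : ℂ} (hβ : β ≠ 0) :
    Tendsto (fun z ↦ z * (cexp (β * z) - 1)⁻¹) (𝓝[≠] 0) (𝓝 β⁻¹) := by
  have hderiv : HasDerivAt (fun z ↦ cexp (β * z)) β 0 := by
    simpa using ((hasDerivAt_id (0 : ℂ)).const_mul β).cexp
  simpa [mul_comm] using (hasDerivAt_iff_tendsto_slope_zero.1 hderiv).inv₀ hβ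

end ExpDecay

/-- Convergence of the integral `lineInt c θ f`, which takes the junk value `0` otherwise. -/
def LineIntegrable (c θ : ℝ) (f : ℂ → ℂ) : Prop :=
  Integrable fun t : ℝ ↦ f (c + cexp (θ * I) * t)

section LineInt

variable {c θ : ℝ} {f g : ℂ → ℂ}

lemma lineInt_congr (h : ∀ t : ℝ, f (c + cexp (θ * I) * t) = g (c + cexp (θ * I) * t)) :
    lineInt c θ f = lineInt c θ g := by
  simp only [lineInt, h]

lemma lineInt_const_mul (a : ℂ) : lineInt c θ (fun u ↦ a * f u) = a * lineInt c θ f := by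
  simp only [lineInt, mul_assoc, integral_const_mul]

lemma lineInt_eq_exp_mul_integral :
    lineInt c θ f = cexp (θ * I) * ∫ t : ℝ, f (c + cexp (θ * I) * t) := by
  rw [lineInt, integral_mul_const, mul_comm]

lemma lineInt_sub_one : lineInt (c - 1) θ f = lineInt c θ fun u ↦ f (u - 1) := by
  simp only [lineInt, ofReal_sub, ofReal_one, sub_add_eq_add_sub]

lemma add_exp_mul_eq_exp_mul (c θ t : ℝ) :
    c + cexp (θ * I) * t =
      cexp (θ * I) * ((t + c * Real.cos θ : ℝ) + (-(c * Real.sin θ) : ℝ) * I) := by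
  have hconj : cexp (θ * I) * (cos θ - sin θ * I) = 1 := by
    rw [exp_mul_I]
    linear_combination Complex.sin_sq_add_cos_sq θ - Complex.sin θ ^ 2 * I_sq
  push_cast
  linear_combination -c * hconj

lemma lineInt_eq_exp_mul_integral_horizontal :
    lineInt c θ f = cexp (θ * I) *
      ∫ x : ℝ, f (cexp (θ * I) * (x + (-(c * Real.sin θ) : ℝ) * I)) := by
  rw [lineInt_eq_exp_mul_integral]
  simp_rw [add_exp_mul_eq_exp_mul]
  rw [integral_add_right_eq_self
    (fun x : ℝ ↦ f (cexp (θ * I) * (x + (-(c * Real.sin θ) : ℝ) * I)))]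

lemma lineIntegrable_of_integrable_horizontal
    (hf : Integrable fun x : ℝ ↦ f (cexp (θ * I) * (x + (-(c * Real.sin θ) : ℝ) * I))) :
    LineIntegrable c θ f := by
  simpa only [LineIntegrable, add_exp_mul_eq_exp_mul] using hf.comp_add_right (c * Real.cos θ)

end LineInt

section Kernel

variable {c θ : ℝ} {v : ℂ}

lemma exp_two_pi_mul_I_mul_ne_one {z : ℂ} (hc : c ∈ Ioo 0 1) (hθ : 0 < Real.sin θ) (hz : z ≠ 0)
    (hzim : z.im ∈ Icc (-(c * Real.sin θ)) (-((c - 1) * Real.sin θ))) :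
    cexp (2 * π * I * cexp (θ * I) * z) ≠ 1 := by
  intro h
  obtain ⟨n, hn⟩ := exp_eq_one_iff.1 h
  have hzn : cexp (θ * I) * z = n :=
    mul_left_cancel₀ two_pi_I_ne_zero (by linear_combination hn)
  have hz_eq : z = n * cexp (-θ * I) := by
    rw [← hzn, mul_right_comm, ← Complex.exp_add]; simp
  have him : z.im = -n * Real.sin θ := by
    rw [hz_eq, exp_mul_I]; simp [← ofReal_sin, ← ofReal_cos]
  rw [him, ← neg_mul, ← neg_mul] at hzim
  have hlow := le_of_mul_le_mul_right hzim.1 hθ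
  have hupp := le_of_mul_le_mul_right hzim.2 hθ
  have : (n : ℝ) < 1 := by linarith [hc.2]
  have : (-1 : ℝ) < n := by linarith [hc.1]
  have hn0 : n = 0 := by norm_cast at *; lia
  exact hz (by simp [hz_eq, hn0])

lemma differentiableOn_inv_exp_sub_one_mul_exp (hc : c ∈ Ioo 0 1) (hθ : 0 < Real.sin θ) (α : ℂ) :
    DifferentiableOn ℂ (fun z ↦ (cexp (2 * π * I * cexp (θ * I) * z) - 1)⁻¹ * cexp (α * z))
      (im ⁻¹' Icc (-(c * Real.sin θ)) (-((c - 1) * Real.sin θ)) \ {0}) :=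
  .mul (.inv (by fun_prop) fun _ hz ↦ sub_ne_zero.2
    (exp_two_pi_mul_I_mul_ne_one hc hθ hz.2 hz.1)) (by fun_prop)

lemma tendsto_sub_smul_inv_exp_sub_one_mul_exp {β : ℂ} (hβ : β ≠ 0) (α : ℂ) :
    Tendsto (fun z ↦ (z - 0) • ((cexp (β * z) - 1)⁻¹ * cexp (α * z))) (𝓝[≠] 0) (𝓝 β⁻¹) := by
  have hexp : Tendsto (fun z ↦ cexp (α * z)) (𝓝[≠] 0) (𝓝 1) :=
    tendsto_nhdsWithin_of_tendsto_nhds (Continuous.tendsto' (by fun_prop) _ _ (by simp))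
  simpa [mul_assoc] using (tendsto_mul_inv_exp_mul_sub_one hβ).mul hexp

lemma exists_isBigO_inv_exp_sub_one_mul_exp (hv : (cexp (θ * I) * v).im ∈ Ioo 0 (Real.sin θ))
    (a b : ℝ) :
    ∃ k > 0, (fun z ↦ (cexp (2 * π * I * cexp (θ * I) * z) - 1)⁻¹ *
      cexp (2 * π * I * (cexp (θ * I) * v) * z)) =O[stripEnds a b]
        fun z ↦ Real.exp (-k * |z.re|) := by
  have hre (w : ℂ) : (2 * π * I * w).re = -(2 * π * w.im) := by simp
  have hα : (2 * π * I * (cexp (θ * I) * v)).re < 0 := by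
    rw [hre, neg_lt_zero]
    exact mul_pos Real.two_pi_pos hv.1
  have hβα : (2 * π * I * cexp (θ * I)).re < (2 * π * I * (cexp (θ * I) * v)).re := by
    rw [hre, hre, exp_ofReal_mul_I_im, neg_lt_neg_iff]
    exact mul_lt_mul_of_pos_left hv.2 Real.two_pi_pos
  exact ⟨_, lt_min (neg_pos.2 hα) (sub_pos.2 hβα),
    isBigO_inv_exp_sub_one_mul_exp_stripEnds hβα hα a b⟩

lemma inv_exp_sub_one_mul_exp_rotate (z : ℂ) :
    (cexp (2 * π * I * (cexp (θ * I) * z)) - 1)⁻¹ * cexp (2 * π * I * (cexp (θ * I) * z) * v) =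
      (cexp (2 * π * I * cexp (θ * I) * z) - 1)⁻¹ *
        cexp (2 * π * I * (cexp (θ * I) * v) * z) := by
  ring_nf

lemma lineIntegrable_inv_exp_sub_one_mul_exp (hc : c ∈ Ioo 0 1)
    (hv : (cexp (θ * I) * v).im ∈ Ioo 0 (Real.sin θ)) :
    LineIntegrable c θ fun u ↦ (cexp (2 * π * I * u) - 1)⁻¹ * cexp (2 * π * I * u * v) := by
  have hθ : 0 < Real.sin θ := hv.1.trans hv.2
  obtain ⟨k, hk, hO⟩ := exists_isBigO_inv_exp_sub_one_mul_exp hv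
    (-(c * Real.sin θ)) (-((c - 1) * Real.sin θ))
  apply lineIntegrable_of_integrable_horizontal
  simp only [inv_exp_sub_one_mul_exp_rotate]
  refine integrable_horizontal_of_isBigO_stripEnds hk (left_mem_Icc.2 (by linarith)) ?_
    (differentiableOn_inv_exp_sub_one_mul_exp hc hθ _).continuousOn hO
  simpa using ⟨hc.1.ne', hθ.ne'⟩

lemma lineIntegrable_inv_exp_sub_one_mul_exp_ofReal (hc : c ∈ Ioo 0 1) {x : ℝ} (hx : x ∈ Ioo 0 1)
    (hθ : 0 < Real.sin θ) :
    LineIntegrable c θ fun u ↦ (cexp (2 * π * I * u) - 1)⁻¹ * cexp (2 * π * I * u * x) := by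
  refine lineIntegrable_inv_exp_sub_one_mul_exp hc ?_
  rw [im_mul_ofReal, exp_ofReal_mul_I_im]
  exact ⟨mul_pos hθ hx.1, mul_lt_of_lt_one_right hθ hx.2⟩

lemma lineInt_sub_lineInt_sub_one_inv_exp_sub_one_mul_exp (hc : c ∈ Ioo 0 1)
    (hv : (cexp (θ * I) * v).im ∈ Ioo 0 (Real.sin θ)) :
    lineInt c θ (fun u ↦ (cexp (2 * π * I * u) - 1)⁻¹ * cexp (2 * π * I * u * v)) -
      lineInt (c - 1) θ (fun u ↦ (cexp (2 * π * I * u) - 1)⁻¹ * cexp (2 * π * I * u * v)) = 1 := by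
  have hθ : 0 < Real.sin θ := hv.1.trans hv.2
  have hω : cexp (θ * I) ≠ 0 := Complex.exp_ne_zero _
  obtain ⟨k, hk, hO⟩ := exists_isBigO_inv_exp_sub_one_mul_exp hv
    (-(c * Real.sin θ)) (-((c - 1) * Real.sin θ))
  have h0 : (0 : ℂ).im ∈ Ioo (-(c * Real.sin θ)) (-((c - 1) * Real.sin θ)) :=
    ⟨neg_neg_of_pos (mul_pos hc.1 hθ), neg_pos.2 (mul_neg_of_neg_of_pos (sub_neg.2 hc.2) hθ)⟩
  have hresidue := integral_sub_integral_of_isBigO_stripEnds hk h0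
    (differentiableOn_inv_exp_sub_one_mul_exp hc hθ _)
    (tendsto_sub_smul_inv_exp_sub_one_mul_exp (mul_ne_zero two_pi_I_ne_zero hω) _) hO
  simp only [lineInt_eq_exp_mul_integral_horizontal, inv_exp_sub_one_mul_exp_rotate]
  rw [← mul_sub, hresidue, smul_eq_mul]
  field_simp

lemma lineInt_inv_exp_sub_one_mul_exp (hc : c ∈ Ioo 0 1)
    (hv : (cexp (θ * I) * v).im ∈ Ioo 0 (Real.sin θ)) :
    lineInt c θ (fun u ↦ (cexp (2 * π * I * u) - 1)⁻¹ * cexp (2 * π * I * u * v)) =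
      (1 - cexp (-(2 * π * I * v)))⁻¹ := by
  have hshift (u : ℂ) :
      (cexp (2 * π * I * (u - 1)) - 1)⁻¹ * cexp (2 * π * I * (u - 1) * v) =
        cexp (-(2 * π * I * v)) * ((cexp (2 * π * I * u) - 1)⁻¹ * cexp (2 * π * I * u * v)) := by
    rw [mul_sub, mul_one, exp_periodic.sub_eq, mul_left_comm, ← Complex.exp_add]
    ring_nf
  have hdiff := lineInt_sub_lineInt_sub_one_inv_exp_sub_one_mul_exp hc hv
  rw [lineInt_sub_one, funext hshift, lineInt_const_mul, ← one_sub_mul] at hdiff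
  exact eq_inv_of_mul_eq_one_right hdiff

end Kernel

section Gaussian

variable {θ : ℝ} {a : ℂ}

lemma add_exp_mul_quadratic (c θ : ℝ) (a b : ℂ) (t : ℝ) :
    a * (c + cexp (θ * I) * t) ^ 2 + b * (c + cexp (θ * I) * t) =
      a * cexp (θ * I) ^ 2 * t ^ 2 + (2 * a * c + b) * cexp (θ * I) * t + (a * c ^ 2 + b * c) := by
  ring

lemma lineIntegrable_cexp_quadratic (ha : (a * cexp (θ * I) ^ 2).re < 0) (c : ℝ) (b : ℂ) :
    LineIntegrable c θ fun v ↦ cexp (a * v ^ 2 + b * v) := by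
  simpa only [LineIntegrable, add_exp_mul_quadratic] using integrable_cexp_quadratic' ha _ _

lemma lineInt_cexp_quadratic (ha : (a * cexp (θ * I) ^ 2).re < 0) (c : ℝ) (b : ℂ) :
    lineInt c θ (fun v ↦ cexp (a * v ^ 2 + b * v)) =
      cexp (θ * I) * (π / -(a * cexp (θ * I) ^ 2)) ^ (1 / 2 : ℂ) * cexp (-b ^ 2 / (4 * a)) := by
  have ha0 : a ≠ 0 := by rintro rfl; simp at ha
  have hω : cexp (θ * I) ≠ 0 := Complex.exp_ne_zero _
  simp only [lineInt_eq_exp_mul_integral, add_exp_mul_quadratic]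
  rw [integral_cexp_quadratic ha, ← mul_assoc]
  congr 2
  field_simp
  ring

end Gaussian

section Multiplication

variable {θ₁ θ₂ : ℝ} {φ ψ : ℂ → ℂ} {c₁ c₂ : ℝ}

lemma cexp_ofReal_mul_I_mul_of_add_eq_pi (hθ : θ₁ + θ₂ = π) :
    cexp (θ₁ * I) * cexp (θ₂ * I) = -1 := by
  rw [← Complex.exp_add, ← add_mul, ← ofReal_add, hθ, exp_pi_mul_I]

lemma im_exp_mul_add_exp_mul_of_add_eq_pi (hθ : θ₁ + θ₂ = π) (c t : ℝ) :
    (cexp (θ₁ * I) * (c + cexp (θ₂ * I) * t)).im = c * Real.sin θ₁ := by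
  rw [mul_add, ← mul_assoc, cexp_ofReal_mul_I_mul_of_add_eq_pi hθ, mul_comm _ (c : ℂ), add_im,
    im_ofReal_mul, exp_ofReal_mul_I_im]
  simp

lemma lineInt_mul_exp_eq_fourier (hθ : θ₁ + θ₂ = π) (c₁ : ℝ) (φ : ℂ → ℂ) (t : ℝ) :
    lineInt c₁ θ₁ (fun u ↦ φ u * cexp (2 * π * I * u * (c₂ + cexp (θ₂ * I) * t))) =
      cexp (θ₁ * I) * cexp (2 * π * I * c₁ * (cexp (θ₂ * I) * t)) *
        𝓕 (fun s : ℝ ↦ φ (c₁ + cexp (θ₁ * I) * s) *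
          cexp (2 * π * I * (c₁ + cexp (θ₁ * I) * s) * c₂)) t := by
  have hω := cexp_ofReal_mul_I_mul_of_add_eq_pi hθ
  rw [lineInt_eq_exp_mul_integral, mul_assoc (cexp (θ₁ * I)),
    Real.fourier_real_eq_integral_exp_smul,
    ← integral_const_mul (cexp (2 * π * I * c₁ * (cexp (θ₂ * I) * t)))]
  congr 2 with s
  rw [smul_eq_mul, mul_left_comm _ (φ _), mul_left_comm _ (φ _), ← Complex.exp_add,
    ← Complex.exp_add]
  congr 2
  push_cast
  linear_combination 2 * π * I * s * t * hω

lemma lineInt_mul_lineInt_exp_eq_integral_mul_fourier (hθ : θ₁ + θ₂ = π) (c₁ c₂ : ℝ)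
    (φ ψ : ℂ → ℂ) :
    lineInt c₁ θ₁ (fun u ↦ φ u * lineInt c₂ θ₂ fun v ↦ ψ v * cexp (2 * π * I * v * u)) =
      -cexp (-(2 * π * I * c₁ * c₂)) * ∫ t : ℝ,
        (φ (c₁ + cexp (θ₁ * I) * t) * cexp (2 * π * I * (c₁ + cexp (θ₁ * I) * t) * c₂)) *
          𝓕 (fun s : ℝ ↦ ψ (c₂ + cexp (θ₂ * I) * s) *
            cexp (2 * π * I * (c₂ + cexp (θ₂ * I) * s) * c₁)) t := by
  have hω := cexp_ofReal_mul_I_mul_of_add_eq_pi hθ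
  have hexp (t : ℝ) : cexp (2 * π * I * c₂ * (cexp (θ₁ * I) * t)) =
      cexp (-(2 * π * I * c₁ * c₂)) * cexp (2 * π * I * (c₁ + cexp (θ₁ * I) * t) * c₂) := by
    rw [← Complex.exp_add]
    ring_nf
  rw [lineInt, ← integral_const_mul]
  refine integral_congr_ae (.of_forall fun t ↦ ?_)
  simp only [lineInt_mul_exp_eq_fourier ((add_comm θ₂ θ₁).trans hθ), hexp]
  linear_combination (φ (c₁ + cexp (θ₁ * I) * t) * cexp (-(2 * π * I * c₁ * c₂)) *
    cexp (2 * π * I * (c₁ + cexp (θ₁ * I) * t) * c₂) *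
    𝓕 (fun s : ℝ ↦ ψ (c₂ + cexp (θ₂ * I) * s) *
      cexp (2 * π * I * (c₂ + cexp (θ₂ * I) * s) * c₁)) t) * hω

lemma integral_mul_fourier_eq_flip {f g : ℝ → ℂ} (hf : Integrable f) (hg : Integrable g) :
    ∫ t, f t * 𝓕 g t = ∫ t, g t * 𝓕 f t := by
  simpa [mul_comm] using! (VectorFourier.integral_bilin_fourierIntegral_eq_flip (.mul ℂ ℂ)
    (L := innerₗ ℝ) Real.continuous_fourierChar continuous_inner hg hf)

lemma lineInt_mul_lineInt_exp_eq_flip (hθ : θ₁ + θ₂ = π)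
    (hφ : LineIntegrable c₁ θ₁ fun u ↦ φ u * cexp (2 * π * I * u * c₂))
    (hψ : LineIntegrable c₂ θ₂ fun v ↦ ψ v * cexp (2 * π * I * v * c₁)) :
    lineInt c₁ θ₁ (fun u ↦ φ u * lineInt c₂ θ₂ fun v ↦ ψ v * cexp (2 * π * I * v * u)) =
      lineInt c₂ θ₂ fun v ↦ ψ v * lineInt c₁ θ₁ fun u ↦ φ u * cexp (2 * π * I * u * v) := by
  rw [lineInt_mul_lineInt_exp_eq_integral_mul_fourier hθ,
    lineInt_mul_lineInt_exp_eq_integral_mul_fourier ((add_comm θ₂ θ₁).trans hθ),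
    integral_mul_fourier_eq_flip hφ hψ, mul_right_comm _ (c₁ : ℂ)]

lemma lineInt_mul_lineInt_inv_exp_sub_one (hθ : θ₁ + θ₂ = π) (hθ₁ : 0 < Real.sin θ₁)
    (hc₁ : c₁ ∈ Ioo 0 1) (hc₂ : c₂ ∈ Ioo 0 1) (ψ : ℂ → ℂ) :
    lineInt c₂ θ₂ (fun v ↦ ψ v *
        lineInt c₁ θ₁ fun u ↦ (cexp (2 * π * I * u) - 1)⁻¹ * cexp (2 * π * I * u * v)) =
      -lineInt c₂ θ₂ fun v ↦ ψ v / (cexp (-(2 * π * I * v)) - 1) := by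
  rw [neg_eq_neg_one_mul, ← lineInt_const_mul]
  refine lineInt_congr fun t ↦ ?_
  have hv : (cexp (θ₁ * I) * (c₂ + cexp (θ₂ * I) * t)).im ∈ Ioo 0 (Real.sin θ₁) := by
    rw [im_exp_mul_add_exp_mul_of_add_eq_pi hθ]
    exact ⟨mul_pos hc₂.1 hθ₁, mul_lt_of_lt_one_left hθ₁ hc₂.2⟩
  rw [lineInt_inv_exp_sub_one_mul_exp hc₁ hv, ← neg_sub, inv_neg, div_eq_mul_inv]
  ring

end Multiplication

section Mordell

variable {τ : ℂ}

lemma neg_pi_mul_I_div_mul_exp_sq (τ : ℂ) :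
    -(π * I / τ) * cexp ((3 * π / 4 : ℝ) * I) ^ 2 = -(π / τ) := by
  have hsq : cexp ((3 * π / 4 : ℝ) * I) ^ 2 = -I := calc
    cexp ((3 * π / 4 : ℝ) * I) ^ 2 = cexp (π * I) * cexp (π / 2 * I) := by
      rw [← Complex.exp_nat_mul, ← Complex.exp_add]; push_cast; ring_nf
    _ = -I := by rw [exp_pi_mul_I, exp_pi_div_two_mul_I, neg_one_mul]
  rw [hsq]
  linear_combination π / τ * I_sq

lemma re_neg_pi_mul_I_div_mul_exp_sq_neg (hτ : 0 < τ.re) :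
    (-(π * I / τ) * cexp ((3 * π / 4 : ℝ) * I) ^ 2).re < 0 := by
  have hτ0 : τ ≠ 0 := ne_zero_of_re_pos hτ
  rw [neg_pi_mul_I_div_mul_exp_sq, neg_re, div_eq_mul_inv, re_ofReal_mul, neg_lt_zero, inv_re]
  exact mul_pos Real.pi_pos (div_pos hτ (normSq_pos.2 hτ0))

lemma exp_mordell_gaussian_mul_exp (τ x u v : ℂ) :
    cexp (-(π * I * v ^ 2 / τ) + 2 * π * I * x * v / τ) * cexp (2 * π * I * v * u) =
      cexp (-(π * I / τ) * v ^ 2 + 2 * π * I * (x / τ + u) * v) := by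
  rw [← Complex.exp_add]
  ring_nf

lemma lineIntegrable_mordell_gaussian (hτ : 0 < τ.re) (c : ℝ) (x u : ℂ) :
    LineIntegrable c (3 * π / 4) fun v ↦
      cexp (-(π * I * v ^ 2 / τ) + 2 * π * I * x * v / τ) * cexp (2 * π * I * v * u) := by
  simp only [exp_mordell_gaussian_mul_exp]
  exact lineIntegrable_cexp_quadratic (re_neg_pi_mul_I_div_mul_exp_sq_neg hτ) c _

lemma lineInt_mordell_gaussian (hτ : 0 < τ.re) (c : ℝ) (x u : ℂ) :
    lineInt c (3 * π / 4) (fun v ↦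
        cexp (-(π * I * v ^ 2 / τ) + 2 * π * I * x * v / τ) * cexp (2 * π * I * v * u)) =
      cexp ((3 * π / 4 : ℝ) * I) * τ ^ (1 / 2 : ℂ) * cexp (π * I * (x ^ 2 / τ)) *
        cexp (π * I * τ * u ^ 2 + 2 * π * I * x * u) := by
  have hτ0 : τ ≠ 0 := ne_zero_of_re_pos hτ
  simp only [exp_mordell_gaussian_mul_exp]
  rw [lineInt_cexp_quadratic (re_neg_pi_mul_I_div_mul_exp_sq_neg hτ),
    neg_pi_mul_I_div_mul_exp_sq, neg_neg, mul_assoc _ (cexp _), ← Complex.exp_add]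
  congr 3
  · exact div_div_cancel₀ (ofReal_ne_zero.2 Real.pi_ne_zero)
  · field_simp
    ring

lemma exp_div_cpow_half_mul_gaussian_factor (hτ : τ ≠ 0) (z : ℂ) :
    cexp (π * I * (1 / 4 - z)) / τ ^ (1 / 2 : ℂ) *
      (cexp ((3 * π / 4 : ℝ) * I) * τ ^ (1 / 2 : ℂ) * cexp (π * I * z)) = -1 := by
  have hpow : τ ^ (1 / 2 : ℂ) ≠ 0 := fun h ↦ hτ ((cpow_eq_zero_iff _ _).1 h).1
  calc _ = cexp (π * I * (1 / 4 - z)) * cexp ((3 * π / 4 : ℝ) * I) * cexp (π * I * z) := by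
        field_simp
    _ = cexp (π * I) := by
        rw [← Complex.exp_add, ← Complex.exp_add]; push_cast; ring_nf
    _ = -1 := exp_pi_mul_I

end Mordell

/-- Integral transformation formula of the Mordell integral. -/
theorem mordell_integral_transform (x τ : ℂ) (hτ : 0 < τ.re) (c₁ c₂ : ℝ)
    (hc₁ : 0 < c₁) (hc₁' : c₁ < 1) (hc₂ : 0 < c₂) (hc₂' : c₂ < 1) :
    lineInt c₁ (π/4) (fun u =>
      Complex.exp ((π : ℂ) * Complex.I * τ * u ^ 2 + 2 * (π : ℂ) * Complex.I * x * u) /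
        (Complex.exp (2 * (π : ℂ) * Complex.I * u) - 1)) =
    Complex.exp ((π : ℂ) * Complex.I * (1 / 4 - x ^ 2 / τ)) / τ ^ (1 / 2 : ℂ) *
    lineInt c₂ (3 * π / 4) (fun u =>
      Complex.exp (-((π : ℂ) * Complex.I * u ^ 2 / τ) + 2 * (π : ℂ) * Complex.I * x * u / τ) /
        (Complex.exp (-(2 * (π : ℂ) * Complex.I * u)) - 1)) := by
  have hθ : π / 4 + 3 * π / 4 = π := by ring
  have hsin : 0 < Real.sin (π / 4) := by rw [Real.sin_pi_div_four]; positivity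
  have hflip := lineInt_mul_lineInt_exp_eq_flip hθ
    (lineIntegrable_inv_exp_sub_one_mul_exp_ofReal ⟨hc₁, hc₁'⟩ ⟨hc₂, hc₂'⟩ hsin)
    (lineIntegrable_mordell_gaussian hτ c₂ x c₁)
  rw [lineInt_mul_lineInt_inv_exp_sub_one hθ hsin ⟨hc₁, hc₁'⟩ ⟨hc₂, hc₂'⟩] at hflip
  simp only [lineInt_mordell_gaussian hτ, mul_left_comm _ (_ * _ * _ : ℂ), lineInt_const_mul,
    inv_mul_eq_div] at hflip
  rw [← neg_eq_iff_eq_neg.2 hflip, mul_neg, ← mul_assoc,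
    exp_div_cpow_half_mul_gaussian_factor (ne_zero_of_re_pos hτ), neg_one_mul, neg_neg]
end

section
/- Let s be a complex number with Re(s) > 0 and let v be any complex number. Then the integral of e^{−iπz² + 2πivz}·z^{s−1} dz along the ray from 0 to e^{3πi/4}·∞, i.e. ∫_0^∞ e^{−πr² + 2πi·v·e^{3πi/4}·r}·(e^{3πi/4}·r)^{s−1}·e^{3πi/4} dr, converges and equals (2π)^{−s/2}·e^{3iπs/4}·∫_0^∞ e^{−w²/2 − √(2π)·e^{iπ/4}·v·w}·w^{s−1} dw. (Equivalently, it equals (2π)^{−s/2}·Γ(s)·e^{3iπs/4 + iπv²/2}·U(s − 1/2, √(2π)·e^{iπ/4}·v), where U is the parabolic cylinder function expressed through its real integral representation.) -/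
open scoped Real
open MeasureTheory Set Complex

/-!
Parametrizing the ray as `z = ω r` with `ω = e^{3πi/4}`, the factor `z ^ (s - 1) dz` becomes
`ω ^ s r ^ (s - 1) dr`, so the ray integral is `ω ^ s` times a Mellin transform over the half-line.
Since `i ω = -e^{iπ/4}`, the substitution `w = √(2π) r` turns the Gaussian factor into the one on
the right-hand side, and by homogeneity of the Mellin transform it contributes `√(2π) ^ (-s)`.
-/

section Powers

lemma exp_cpow {z : ℂ} (hlt : -π < z.im) (hle : z.im ≤ π) (s : ℂ) :
    exp z ^ s = exp (z * s) := by
  rw [cpow_def_of_ne_zero (exp_ne_zero z), log_exp hlt hle]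

lemma mul_ofReal_cpow (ω : ℂ) {r : ℝ} (hr : 0 ≤ r) (s : ℂ) :
    (ω * r) ^ s = ω ^ s * (r : ℂ) ^ s := by
  rcases eq_or_ne s 0 with rfl | hs
  · simp
  rcases eq_or_ne ω 0 with rfl | hω
  · simp [hs]
  rcases hr.eq_or_lt with rfl | hr
  · simp [hs]
  · have hr₀ : (r : ℂ) ≠ 0 := ofReal_ne_zero.2 hr.ne'
    rw [cpow_def_of_ne_zero (mul_ne_zero hω hr₀), cpow_def_of_ne_zero hω,
      cpow_def_of_ne_zero hr₀, log_mul_ofReal r hr ω hω, ofReal_log hr.le, ← exp_add]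
    ring_nf

lemma ofReal_sqrt_cpow {x : ℝ} (hx : 0 ≤ x) (s : ℂ) :
    ((√x : ℝ) : ℂ) ^ s = (x : ℂ) ^ (s / 2) := by
  have harg : arg ((√x : ℝ) : ℂ) = 0 := arg_ofReal_of_nonneg (Real.sqrt_nonneg x)
  calc ((√x : ℝ) : ℂ) ^ s
    _ = ((√x : ℝ) : ℂ) ^ (2 * (s / 2)) := by rw [mul_div_cancel₀ s two_ne_zero]
    _ = (((√x : ℝ) : ℂ) ^ 2) ^ (s / 2) :=
      cpow_ofNat_mul' (by simp [harg, Real.pi_pos]) (by simp [harg, Real.pi_nonneg]) _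
    _ = (x : ℂ) ^ (s / 2) := by rw [← ofReal_pow, Real.sq_sqrt hx]

end Powers

section RayIntegrals

variable {ω : ℂ}

lemma eqOn_ray_integrand (hω : ω ≠ 0) (g : ℝ → ℂ) (s : ℂ) :
    EqOn (fun r : ℝ => g r * (ω * r) ^ (s - 1) * ω)
      (fun r : ℝ => ω ^ s * ((r : ℂ) ^ (s - 1) • g r)) (Ioi 0) := fun r (hr : 0 < r) => by
  calc g r * (ω * r) ^ (s - 1) * ω
      = ω ^ (s - 1) * ω * ((r : ℂ) ^ (s - 1) * g r) := by rw [mul_ofReal_cpow ω hr.le]; ring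
    _ = ω ^ s * ((r : ℂ) ^ (s - 1) • g r) := by
      rw [cpow_sub _ _ hω, cpow_one, div_mul_cancel₀ _ hω, smul_eq_mul]

lemma integrableOn_ray_iff_mellinConvergent (hω : ω ≠ 0) (g : ℝ → ℂ) (s : ℂ) :
    IntegrableOn (fun r : ℝ => g r * (ω * r) ^ (s - 1) * ω) (Ioi 0) ↔ MellinConvergent g s := by
  rw [integrableOn_congr_fun (eqOn_ray_integrand hω g s) measurableSet_Ioi]
  exact integrable_const_mul_iff (cpow_ne_zero_iff.2 (Or.inl hω)).isUnit _

lemma setIntegral_ray_eq_cpow_mul_mellin (hω : ω ≠ 0) (g : ℝ → ℂ) (s : ℂ) :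
    ∫ r in Ioi (0 : ℝ), g r * (ω * r) ^ (s - 1) * ω = ω ^ s * mellin g s := by
  rw [setIntegral_congr_fun measurableSet_Ioi (eqOn_ray_integrand hω g s), integral_const_mul,
    mellin]

end RayIntegrals

section Gaussian

lemma mellinConvergent_cexp_quadratic {a s : ℂ} (ha : a.re < 0) (b : ℂ) (hs : 0 < s.re) :
    MellinConvergent (fun t : ℝ => exp (a * t ^ 2 + b * t)) s := by
  have hcont : Continuous fun t : ℝ => exp (a * t ^ 2 + b * t) := by fun_prop
  refine mellinConvergent_of_isBigO_rpow (a := s.re + 1) (b := 0)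
    (hcont.locallyIntegrable.locallyIntegrableOn _)
    (cexp_neg_quadratic_isLittleO_rpow_atTop ha b _).isBigO (lt_add_one _) ?_ hs
  simpa using (hcont.tendsto 0).isBigO_one ℝ |>.mono nhdsWithin_le_nhds

lemma I_mul_exp_three_pi_mul_I_div_four : I * exp (3 * π * I / 4) = -exp (π * I / 4) := by
  have hsplit : 3 * π * I / 4 = π * I / 4 + π / 2 * I := by ring
  rw [hsplit, exp_add, exp_pi_div_two_mul_I]
  linear_combination exp (π * I / 4) * I_mul_I

lemma exp_three_pi_mul_I_div_four_cpow (s : ℂ) :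
    exp (3 * π * I / 4) ^ s = exp (3 * π * I * s / 4) := by
  have him : (3 * π * I / 4).im = 3 * π / 4 := by simp
  rw [exp_cpow (by linarith [Real.pi_pos]) (by linarith [Real.pi_pos])]
  ring_nf

lemma gaussian_on_ray_eq_comp_sqrt_two_pi_mul (v : ℂ) (r : ℝ) :
    exp (-((π : ℂ) * (r : ℂ) ^ 2) + 2 * (π : ℂ) * I * v * (exp (3 * (π : ℂ) * I / 4) * (r : ℂ))) =
      exp (-(((√(2 * π) * r : ℝ) : ℂ) ^ 2 / 2) -
        (√(2 * π) : ℂ) * exp ((π : ℂ) * I / 4) * v * ((√(2 * π) * r : ℝ) : ℂ)) := by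
  have hsq : ((√(2 * π) : ℝ) : ℂ) ^ 2 = 2 * π := by
    exact_mod_cast Real.sq_sqrt Real.two_pi_pos.le
  congr 1
  push_cast
  linear_combination ((r : ℂ) ^ 2 / 2 + exp (π * I / 4) * v * r) * hsq +
    2 * π * v * r * I_mul_exp_three_pi_mul_I_div_four

end Gaussian

/-- Gaussian integral along the ray from `0` to `e^{3πi/4}·∞`: for `Re s > 0` and any
complex `v` it converges and equals `(2π)^{-s/2}·e^{3iπs/4}` times the real integral
representation of `Γ(s)·e^{iπv²/2}·U(s - 1/2, √(2π)·e^{iπ/4}·v)`. -/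
theorem ray_integral_parabolic_cylinder (s v : ℂ) (hs : 0 < s.re) :
    MeasureTheory.IntegrableOn (fun r : ℝ =>
      Complex.exp (-((π : ℂ) * (r : ℂ) ^ 2) + 2 * (π : ℂ) * Complex.I * v *
          (Complex.exp (3 * (π : ℂ) * Complex.I / 4) * (r : ℂ))) *
        (Complex.exp (3 * (π : ℂ) * Complex.I / 4) * (r : ℂ)) ^ (s - 1) *
        Complex.exp (3 * (π : ℂ) * Complex.I / 4)) (Set.Ioi (0 : ℝ)) ∧
    (∫ r in Set.Ioi (0 : ℝ),
      Complex.exp (-((π : ℂ) * (r : ℂ) ^ 2) + 2 * (π : ℂ) * Complex.I * v *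
          (Complex.exp (3 * (π : ℂ) * Complex.I / 4) * (r : ℂ))) *
        (Complex.exp (3 * (π : ℂ) * Complex.I / 4) * (r : ℂ)) ^ (s - 1) *
        Complex.exp (3 * (π : ℂ) * Complex.I / 4)) =
      (2 * (π : ℂ)) ^ (-s / 2) * Complex.exp (3 * (π : ℂ) * Complex.I * s / 4) *
        ∫ w in Set.Ioi (0 : ℝ),
          Complex.exp (-((w : ℂ) ^ 2 / 2) -
              (Real.sqrt (2 * π) : ℂ) * Complex.exp ((π : ℂ) * Complex.I / 4) * v * (w : ℂ)) *
            (w : ℂ) ^ (s - 1) := by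
  let f : ℝ → ℂ := fun w =>
    exp (-((w : ℂ) ^ 2 / 2) - (√(2 * π) : ℂ) * exp ((π : ℂ) * I / 4) * v * (w : ℂ))
  have hf : MellinConvergent f s := by
    convert mellinConvergent_cexp_quadratic (a := -1 / 2) (by norm_num)
      (-((√(2 * π) : ℂ) * exp (π * I / 4) * v)) hs using 3
    ring
  have hc : 0 < √(2 * π) := Real.sqrt_pos.2 Real.two_pi_pos
  have hscale : ((√(2 * π) : ℝ) : ℂ) ^ (-s) = (2 * π) ^ (-s / 2) := by
    rw [ofReal_sqrt_cpow Real.two_pi_pos.le, ofReal_mul, ofReal_ofNat]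
  have hω : exp (3 * π * I / 4) ≠ 0 := exp_ne_zero _
  simp only [gaussian_on_ray_eq_comp_sqrt_two_pi_mul]
  refine ⟨(integrableOn_ray_iff_mellinConvergent hω (fun r => f (√(2 * π) * r)) s).2
    ((MellinConvergent.comp_mul_left hc).2 hf), ?_⟩
  calc _ = exp (3 * π * I / 4) ^ s * mellin (fun r => f (√(2 * π) * r)) s :=
        setIntegral_ray_eq_cpow_mul_mellin hω _ s
    _ = (2 * π) ^ (-s / 2) * exp (3 * π * I * s / 4) * mellin f s := by
        rw [mellin_comp_mul_left f s hc, hscale, exp_three_pi_mul_I_div_four_cpow, smul_eq_mul]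
        ring
    _ = _ := by simp only [mellin, f, smul_eq_mul, mul_comm]
end
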